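/- Let E1, E3 ∈ ℂ with Im(E1) > 0, Im(E3) > 0, E1 ≠ E3, E_{-1} = conj(E1), E_{-3} = conj(E3), E2 = E3 + ε. Then as ε → 0⁺, the contour integral ∫_{[E2,E3]} dζ / R₊(ζ;ε) (boundary value of R from the left of the oriented segment) converges to (-iπ / ((E3 - E_{-1})(E3 - E_{-3}))) · √((E3 - E_{-1})/(E3 - E1)), with error O(ε). -/

import Mathlib

/-!
Parametrise the segment by `ζ = E3 + ε (1 - t)`, `0 < t < 1`. Approaching `ζ` from the left of
`[E2, E3]` makes `(z - E3) / (z - E2)` tend to `-(1 - t) / t` through the upper half-plane, so its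
root tends to `i √((1 - t) / t)`. The parameter `ε` then cancels and
`dζ / R₊ = -i H(t) dt / √(t (1 - t))`, where `H(t)` collects the factors of `1 / R` that are regular
at `E3` (`boundary_value`). Since `∫ dt / √(t (1 - t)) = π` over `(0, 1)` (an arcsine integral),
everything reduces to the uniform bound `H(t) = H₀ + O(ε)`, with
`H₀ = √((E3 - Ē1) / (E3 - E1)) / ((E3 - Ē1) (E3 - Ē3))`.

The delicate factor is `√((z - E1) / (z - Ē1))`, because `E3` may lie on its cut, the vertical
segment from `Ē1` to `E1`. The points `ζ` lie to the right of `E3`, so for small `ε` they stay off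
that cut and on one side of the line `Re z = Re E1`. There the reciprocal of the factor equals
`√((z - Ē1) / (z - E1))`, whose argument remains in a half-plane (closed upper or open lower) on
which the principal root is continuous; this gives exactly the root appearing in the limit
(`exists_lipschitz_outer`). All square roots are compared through
`√p - √q = (p - q) / (√p + √q)`, the denominator being at least `|√q|` when the two roots lie in one
quadrant (`csqrt_sub_le`).
-/

open Complex Filter
open scoped ComplexConjugate

/-! ### The principal square root -/

lemma csqrt_sq (z : ℂ) : (z ^ ((1 : ℂ) / 2)) ^ 2 = z := by
  rw [← Complex.cpow_nat_mul]; norm_num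

lemma norm_csqrt_sq (z : ℂ) : ‖z ^ ((1 : ℂ) / 2)‖ ^ 2 = ‖z‖ := by
  rw [← norm_pow, csqrt_sq]

lemma csqrt_ne_zero {z : ℂ} (hz : z ≠ 0) : z ^ ((1 : ℂ) / 2) ≠ 0 := by
  intro h
  apply hz
  rw [← csqrt_sq z, h]; norm_num

lemma csqrt_re_nonneg (z : ℂ) : 0 ≤ (z ^ ((1 : ℂ) / 2)).re := by
  by_cases hz : z = 0
  · simp [hz]
  rw [Complex.cpow_def_of_ne_zero hz, Complex.exp_re]
  have : (log z * (1 / 2)).im = arg z / 2 := by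
    simp [Complex.log_im]; ring
  rw [this]
  have h1 := Complex.neg_pi_lt_arg z
  have h2 := Complex.arg_le_pi z
  exact mul_nonneg (Real.exp_pos _).le
    (Real.cos_nonneg_of_neg_pi_div_two_le_of_le (by linarith) (by linarith))

lemma csqrt_im_nonneg {z : ℂ} (h : 0 ≤ z.im) : 0 ≤ (z ^ ((1 : ℂ) / 2)).im := by
  by_cases hz : z = 0
  · simp [hz]
  rw [Complex.cpow_def_of_ne_zero hz, Complex.exp_im]
  have : (log z * (1 / 2)).im = arg z / 2 := by
    simp [Complex.log_im]; ring
  rw [this]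
  have h1 := Complex.arg_nonneg_iff.2 h
  have h2 := Complex.arg_le_pi z
  exact mul_nonneg (Real.exp_pos _).le
    (Real.sin_nonneg_of_nonneg_of_le_pi (by linarith) (by linarith))

lemma csqrt_im_nonpos {z : ℂ} (h : z.im < 0) : (z ^ ((1 : ℂ) / 2)).im ≤ 0 := by
  have hz : z ≠ 0 := by rintro rfl; simp at h
  rw [Complex.cpow_def_of_ne_zero hz, Complex.exp_im]
  have : (log z * (1 / 2)).im = arg z / 2 := by
    simp [Complex.log_im]; ring
  rw [this]
  have h1 := Complex.arg_neg_iff.2 h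
  have h2 := Complex.neg_pi_lt_arg z
  exact mul_nonpos_of_nonneg_of_nonpos (Real.exp_pos _).le
    (Real.sin_nonpos_of_nonpos_of_neg_pi_le (by linarith) (by linarith))

/-- If `√p` and `√q` lie in a common closed quadrant then `‖√q‖ ≤ ‖√p + √q‖`, which bounds the
denominator in `√p - √q = (p - q) / (√p + √q)`. -/
lemma csqrt_sub_le {p q : ℂ} (h : 0 ≤ (p ^ ((1 : ℂ) / 2)).im * (q ^ ((1 : ℂ) / 2)).im) :
    ‖p ^ ((1 : ℂ) / 2) - q ^ ((1 : ℂ) / 2)‖ * ‖q ^ ((1 : ℂ) / 2)‖ ≤ ‖p - q‖ := by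
  have e : p - q = (p ^ ((1 : ℂ) / 2) - q ^ ((1 : ℂ) / 2)) *
      (p ^ ((1 : ℂ) / 2) + q ^ ((1 : ℂ) / 2)) := by
    conv_lhs => rw [← csqrt_sq p, ← csqrt_sq q]
    ring
  have hp := csqrt_re_nonneg p
  have hq := csqrt_re_nonneg q
  rw [e, norm_mul]
  refine mul_le_mul_of_nonneg_left ?_ (norm_nonneg _)
  generalize p ^ ((1 : ℂ) / 2) = a at *
  generalize q ^ ((1 : ℂ) / 2) = b at *
  rw [Complex.norm_def, Complex.norm_def]
  apply Real.sqrt_le_sqrt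
  simp only [Complex.normSq_apply, Complex.add_re, Complex.add_im]
  nlinarith [mul_nonneg hp hq, sq_nonneg a.re, sq_nonneg a.im]

lemma csqrt_neg_ofReal {b : ℝ} (hb : 0 < b) :
    (-((b : ℂ) ^ 2)) ^ ((1 : ℂ) / 2) = I * b := by
  have h1 := csqrt_sq (-((b : ℂ) ^ 2))
  have h2 := csqrt_im_nonneg (z := -((b : ℂ) ^ 2)) (by
    rw [← Complex.ofReal_pow, ← Complex.ofReal_neg, Complex.ofReal_im])
  generalize (-((b : ℂ) ^ 2)) ^ ((1 : ℂ) / 2) = a at *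
  have h3 : (a - I * b) * (a + I * b) = 0 := by
    linear_combination h1 - (b : ℂ) ^ 2 * Complex.I_sq
  rcases mul_eq_zero.1 h3 with h | h
  · exact sub_eq_zero.1 h
  · have := congrArg Complex.im h
    simp at this
    linarith

/-! ### The cut `[E2, E3]` and the arcsine integral -/

/-- The boundary value of `√((z - E3) / (z - E2))` at `z = E3 + ε (1 - t)` from the left of
`[E2, E3]`, with the common factor `ε` of numerator and denominator removed: the quotient stays in
the upper half-plane, hence the sign `+I`. -/
lemma tendsto_cut_factor {t : ℝ} (h0 : 0 < t) (h1 : t < 1) :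
    Tendsto (fun s : ℝ => (((1 - t : ℝ) - I * s) / (-(t : ℂ) - I * s)) ^ ((1 : ℂ) / 2))
      (nhdsWithin 0 (Set.Ioi 0)) (nhds (I * (√(1 - t) / √t : ℝ))) := by
  have hb : 0 < √(1 - t) / √t := by
    have := Real.sqrt_pos.2 h0
    have := Real.sqrt_pos.2 (sub_pos.2 h1)
    positivity
  set b := √(1 - t) / √t with hbdef
  have hb2 : b ^ 2 = (1 - t) / t := by
    rw [hbdef, div_pow, Real.sq_sqrt h0.le, Real.sq_sqrt (by linarith)]
  have htc : (t : ℂ) ≠ 0 := by exact_mod_cast h0.ne'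
  have hq : -((b : ℂ) ^ 2) = ((1 - t : ℝ) - I * (0 : ℝ)) / (-(t : ℂ) - I * (0 : ℝ)) := by
    rw [← Complex.ofReal_pow, hb2]
    simp [div_neg]
  rw [← csqrt_neg_ofReal hb]
  have hlim : Tendsto (fun s : ℝ => ((1 - t : ℝ) - I * s) / (-(t : ℂ) - I * s))
      (nhdsWithin 0 (Set.Ioi 0)) (nhds (-((b : ℂ) ^ 2))) := by
    rw [hq]
    have : ContinuousAt (fun s : ℝ => ((1 - t : ℝ) - I * s) / (-(t : ℂ) - I * s)) 0 := by
      apply ContinuousAt.div (by fun_prop) (by fun_prop)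
      simpa using htc
    exact this.tendsto.mono_left nhdsWithin_le_nhds
  rw [tendsto_iff_norm_sub_tendsto_zero] at hlim ⊢
  have hlim2 := hlim.div_const b
  rw [zero_div] at hlim2
  refine squeeze_zero' (Eventually.of_forall fun _ => norm_nonneg _) ?_ hlim2
  filter_upwards [self_mem_nhdsWithin] with s hs
  rw [le_div_iff₀ hb]
  have hs' : (0 : ℝ) < s := hs
  have hpim : 0 ≤ (((1 - t : ℝ) - I * s) / (-(t : ℂ) - I * s)).im := by
    rw [Complex.div_im]
    simp only [Complex.sub_im, Complex.sub_re, Complex.neg_re, Complex.neg_im, Complex.ofReal_re,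
      Complex.ofReal_im, Complex.mul_re, Complex.mul_im, Complex.I_re, Complex.I_im]
    rw [← sub_div]
    apply div_nonneg _ (Complex.normSq_nonneg _)
    nlinarith
  have hnb : ‖(-((b : ℂ) ^ 2)) ^ ((1 : ℂ) / 2)‖ = b := by
    rw [csqrt_neg_ofReal hb]
    simp [abs_of_pos hb]
  have := csqrt_sub_le (p := ((1 - t : ℝ) - I * s) / (-(t : ℂ) - I * s)) (q := -((b : ℂ) ^ 2))
    (mul_nonneg (csqrt_im_nonneg hpim) (csqrt_im_nonneg (by
      rw [← Complex.ofReal_pow, ← Complex.ofReal_neg, Complex.ofReal_im])))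
  rwa [hnb] at this

lemma hasDerivAt_arcsin_cut {x : ℝ} (hx : x ∈ Set.Ioo (0 : ℝ) 1) :
    HasDerivAt (fun x : ℝ => Real.arcsin (2 * x - 1)) (1 / (√x * √(1 - x))) x := by
  obtain ⟨h0, h1⟩ := hx
  have := (Real.hasDerivAt_arcsin (x := 2 * x - 1) (by linarith) (by linarith)).comp x
    (((hasDerivAt_id x).const_mul 2).sub_const 1)
  refine this.congr_deriv ?_
  have h : √(1 - (2 * x - 1) ^ 2) = 2 * (√x * √(1 - x)) := by
    rw [← Real.sqrt_mul h0.le, show 1 - (2 * x - 1) ^ 2 = 2 ^ 2 * (x * (1 - x)) by ring,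
      Real.sqrt_mul (by norm_num), Real.sqrt_sq (by norm_num)]
  rw [h]
  have := Real.sqrt_pos.2 h0
  have := Real.sqrt_pos.2 (sub_pos.2 h1)
  field_simp

lemma continuous_arcsin_cut : Continuous (fun x : ℝ => Real.arcsin (2 * x - 1)) :=
  Real.continuous_arcsin.comp (by fun_prop)

lemma integrable_cut :
    IntervalIntegrable (fun x : ℝ => 1 / (√x * √(1 - x))) MeasureTheory.volume 0 1 := by
  rw [intervalIntegrable_iff_integrableOn_Ioc_of_le zero_le_one]
  exact intervalIntegral.integrableOn_deriv_of_nonneg continuous_arcsin_cut.continuousOn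
    (fun x hx => hasDerivAt_arcsin_cut hx) (fun x _ => by positivity)

lemma integral_cut : ∫ x in (0 : ℝ)..1, 1 / (√x * √(1 - x)) = Real.pi := by
  rw [intervalIntegral.integral_eq_sub_of_hasDerivAt_of_le zero_le_one
    continuous_arcsin_cut.continuousOn (fun x hx => hasDerivAt_arcsin_cut hx) integrable_cut]
  norm_num

/-! ### The regular factors -/

/-- Lipschitz bound at `E3` for the `ε`-independent regular factors of `1 / R`, together with the
fact that `z = E3 + x` avoids the cut of `√((z - E1) / (z - Ē1))`. The reciprocal of that root is
written with the inverse inside. Its argument then stays in one half-plane (closed upper or open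
lower) for small `x ≥ 0`, so this form extends continuously to `x = 0` even if `E3` lies on the cut
joining `E1` to `Ē1`. -/
lemma exists_lipschitz_outer {E1 E3 : ℂ} (hE1 : 0 < E1.im) (hE3 : 0 < E3.im) (hne : E1 ≠ E3) :
    ∃ C > 0, ∃ δ > 0, ∀ x ∈ Set.Ioo (0 : ℝ) δ,
      ((E3 + x - E1) / (E3 + x - conj E1)).im ≠ 0 ∧
      ‖((E3 + x - conj E1) * (E3 + x - conj E3))⁻¹ *
          ((E3 + x - conj E1) / (E3 + x - E1)) ^ ((1 : ℂ) / 2) -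
        ((E3 - conj E1) * (E3 - conj E3))⁻¹ *
          ((E3 - conj E1) / (E3 - E1)) ^ ((1 : ℂ) / 2)‖ ≤ C * x := by
  have n1 : E3 - E1 ≠ 0 := sub_ne_zero.2 hne.symm
  have n2 : E3 - conj E1 ≠ 0 := fun h => by
    have := congrArg Complex.im h; simp at this; linarith
  have n3 : E3 - conj E3 ≠ 0 := fun h => by
    have := congrArg Complex.im h; simp at this; linarith
  set P : ℝ → ℂ := fun x => ((E3 + x - conj E1) * (E3 + x - conj E3))⁻¹ with hP
  set Q : ℝ → ℂ := fun x => (E3 + x - conj E1) / (E3 + x - E1) with hQ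
  have hd : HasDerivAt (fun x : ℝ => (x : ℂ)) 1 0 := Complex.ofRealCLM.hasDerivAt
  have hdd (a : ℂ) : DifferentiableAt ℝ (fun x : ℝ => E3 + x - a) 0 :=
    (hd.differentiableAt.const_add E3).sub_const a
  have dP : DifferentiableAt ℝ P 0 := by
    apply DifferentiableAt.fun_inv ((hdd _).fun_mul (hdd _))
    simpa using ⟨n2, n3⟩
  have dQ : DifferentiableAt ℝ Q 0 := by
    apply DifferentiableAt.fun_div (hdd _) (hdd _)
    simpa using n1
  have key {F : ℝ → ℂ} (dF : DifferentiableAt ℝ F 0) :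
      ∃ C > 0, ∃ δ > 0, ∀ x ∈ Set.Ioo (0 : ℝ) δ, ‖F x - F 0‖ ≤ C * x := by
    obtain ⟨C, hC, h⟩ := dF.isBigO_sub.exists_pos
    obtain ⟨δ, hδ, h⟩ := Metric.eventually_nhds_iff.1 h.bound
    refine ⟨C, hC, δ, hδ, fun x hx => ?_⟩
    have := h (y := x) (by rw [Real.dist_eq, sub_zero, abs_of_pos hx.1]; exact hx.2)
    rwa [sub_zero, Real.norm_eq_abs, abs_of_pos hx.1] at this
  obtain ⟨CP, hCP, δP, hδP, bP⟩ := key dP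
  obtain ⟨CQ, hCQ, δQ, hδQ, bQ⟩ := key dQ
  have P0 : P 0 = ((E3 - conj E1) * (E3 - conj E3))⁻¹ := by simp [hP]
  have Q0 : Q 0 = (E3 - conj E1) / (E3 - E1) := by simp [hQ]
  have Q0ne : Q 0 ≠ 0 := by rw [Q0]; exact div_ne_zero n2 n1
  have Qim (x : ℝ) : (Q x).im =
      2 * (E3.re + x - E1.re) * E1.im / Complex.normSq (E3 + x - E1) := by
    simp only [hQ, Complex.div_im]
    simp
    ring
  have Wim (x : ℝ) : ((E3 + x - E1) / (E3 + x - conj E1)).im =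
      -2 * (E3.re + x - E1.re) * E1.im / Complex.normSq (E3 + x - conj E1) := by
    simp only [Complex.div_im]
    simp
    ring
  have Wne (x : ℝ) (hx : E3.re + x - E1.re ≠ 0) :
      ((E3 + x - E1) / (E3 + x - conj E1)).im ≠ 0 := by
    rw [Wim]
    refine div_ne_zero (mul_ne_zero (mul_ne_zero (by norm_num) hx) hE1.ne') ?_
    rw [Ne, Complex.normSq_eq_zero]
    intro h
    have := congrArg Complex.im h; simp at this; linarith
  -- `x` moves to the right, so the sign of `Re (E3 + x - E1)` is constant on some `(0, δ)`.
  have hside : ∃ δ > 0, ∀ x ∈ Set.Ioo (0 : ℝ) δ, E3.re + x - E1.re ≠ 0 ∧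
      0 ≤ (Q x ^ ((1 : ℂ) / 2)).im * (Q 0 ^ ((1 : ℂ) / 2)).im := by
    rcases le_or_gt E1.re E3.re with h | h
    · refine ⟨1, one_pos, fun x hx => ⟨by linarith [hx.1], ?_⟩⟩
      have hpos (y : ℝ) (hy : 0 ≤ y) : 0 ≤ (Q y).im := by
        rw [Qim]
        have : 0 ≤ E3.re + y - E1.re := by linarith
        exact div_nonneg (by positivity) (Complex.normSq_nonneg _)
      exact mul_nonneg (csqrt_im_nonneg (hpos x hx.1.le)) (csqrt_im_nonneg (hpos 0 le_rfl))
    · refine ⟨E1.re - E3.re, by linarith, fun x hx => ⟨by linarith [hx.2], ?_⟩⟩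
      have hneg (y : ℝ) (hy : y < E1.re - E3.re) : (Q y).im < 0 := by
        rw [Qim]
        refine div_neg_of_neg_of_pos ?_ (Complex.normSq_pos.2 ?_)
        · nlinarith
        · intro h
          have := congrArg Complex.re h; simp at this; linarith
      exact mul_nonneg_of_nonpos_of_nonpos (csqrt_im_nonpos (hneg x hx.2))
        (csqrt_im_nonpos (hneg 0 (by linarith)))
  obtain ⟨δS, hδS, bS⟩ := hside
  have hσ : 0 < ‖Q 0 ^ ((1 : ℂ) / 2)‖ := norm_pos_iff.2 (csqrt_ne_zero Q0ne)
  set σ := ‖Q 0 ^ ((1 : ℂ) / 2)‖ with hσdef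
  refine ⟨CP * (σ + CQ / σ) + ‖P 0‖ * (CQ / σ), by positivity,
    min (min δP δQ) (min δS 1), by positivity, fun x hx => ?_⟩
  obtain ⟨hx0, hx1⟩ := hx
  simp only [lt_min_iff] at hx1
  obtain ⟨⟨hxP, hxQ⟩, hxS, hx1⟩ := hx1
  refine ⟨Wne x (bS x ⟨hx0, hxS⟩).1, ?_⟩
  have b1 := bP x ⟨hx0, hxP⟩
  have b2 : ‖Q x ^ ((1 : ℂ) / 2) - Q 0 ^ ((1 : ℂ) / 2)‖ ≤ CQ / σ * x := by
    have := (csqrt_sub_le (bS x ⟨hx0, hxS⟩).2).trans (bQ x ⟨hx0, hxQ⟩)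
    rw [div_mul_eq_mul_div, le_div_iff₀ hσ]
    exact this
  have b3 : ‖Q x ^ ((1 : ℂ) / 2)‖ ≤ σ + CQ / σ := by
    have := norm_le_norm_add_norm_sub' (Q x ^ ((1 : ℂ) / 2)) (Q 0 ^ ((1 : ℂ) / 2))
    have h4 : CQ / σ * x ≤ CQ / σ := mul_le_of_le_one_right (by positivity) hx1.le
    linarith
  rw [← P0, ← Q0]
  change ‖P x * Q x ^ ((1 : ℂ) / 2) - P 0 * Q 0 ^ ((1 : ℂ) / 2)‖ ≤ _
  calc _ = ‖(P x - P 0) * Q x ^ ((1 : ℂ) / 2) +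
        P 0 * (Q x ^ ((1 : ℂ) / 2) - Q 0 ^ ((1 : ℂ) / 2))‖ := by congr 1; ring
    _ ≤ ‖P x - P 0‖ * ‖Q x ^ ((1 : ℂ) / 2)‖ +
        ‖P 0‖ * ‖Q x ^ ((1 : ℂ) / 2) - Q 0 ^ ((1 : ℂ) / 2)‖ := by
      rw [← norm_mul, ← norm_mul]; exact norm_add_le _ _
    _ ≤ (CP * x) * (σ + CQ / σ) + ‖P 0‖ * (CQ / σ * x) := by gcongr
    _ = _ := by ring

/-- The root `√v` of `v = (z - Ē3 - ε) / (z - Ē3)` has inverse within `O(ε)` of `1`, because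
`‖v - 1‖ = O(ε)` and `Re √v ≥ 0`. -/
lemma inv_csqrt_near_one {v : ℂ} {η : ℝ} (hv : ‖v - 1‖ ≤ η) (hη : η ≤ 1 / 2) :
    ‖(v ^ ((1 : ℂ) / 2))⁻¹‖ ≤ 2 ∧ ‖(v ^ ((1 : ℂ) / 2))⁻¹ - 1‖ ≤ 2 * η := by
  have h1 : 1 / 2 ≤ ‖v‖ := by
    have := norm_le_norm_add_norm_sub v 1
    rw [norm_one] at this
    linarith
  have h2 : 1 / 2 ≤ ‖v ^ ((1 : ℂ) / 2)‖ := by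
    have := norm_csqrt_sq v
    nlinarith [norm_nonneg (v ^ ((1 : ℂ) / 2))]
  have h3 : ‖v ^ ((1 : ℂ) / 2) - 1‖ ≤ η := by
    have := csqrt_sub_le (p := v) (q := 1) (by simp)
    simp only [Complex.one_cpow, norm_one, mul_one] at this
    linarith
  have hne : v ^ ((1 : ℂ) / 2) ≠ 0 := norm_pos_iff.1 (by linarith)
  have h4 : ‖(v ^ ((1 : ℂ) / 2))⁻¹‖ ≤ 2 := by
    rw [norm_inv]
    exact inv_le_of_inv_le₀ (by linarith) (by linarith)
  refine ⟨h4, ?_⟩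
  have : (v ^ ((1 : ℂ) / 2))⁻¹ - 1 = -((v ^ ((1 : ℂ) / 2))⁻¹ * (v ^ ((1 : ℂ) / 2) - 1)) := by
    field_simp
    ring
  rw [this, norm_neg, norm_mul]
  exact mul_le_mul h4 h3 (norm_nonneg _) (by norm_num)

/-! ### The boundary value and the limit -/

/-- The integrand of the contour integral as the arcsine density times a factor regular in `ε`. -/
lemma boundary_value {E1 E3 : ℂ} {ε t : ℝ} (hε : 0 < ε) (h0 : 0 < t) (h1 : t < 1)
    (n2 : E3 + (ε * (1 - t) : ℝ) - conj E1 ≠ 0) (n3 : E3 + (ε * (1 - t) : ℝ) - conj E3 ≠ 0)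
    (hW : ((E3 + (ε * (1 - t) : ℝ) - E1) / (E3 + (ε * (1 - t) : ℝ) - conj E1)).im ≠ 0)
    (hV : ‖(E3 + (ε * (1 - t) : ℝ) - (conj E3 + ε)) / (E3 + (ε * (1 - t) : ℝ) - conj E3) - 1‖ < 1)
    {R : ℂ → ℂ} {L : ℂ}
    (hR : ∀ z : ℂ, R z =
      (z - (E3 + ε)) * (z - conj E1) * (z - conj E3) *
        ((z - E3) / (z - (E3 + ε))) ^ ((1 : ℂ) / 2) *
        ((z - E1) / (z - conj E1)) ^ ((1 : ℂ) / 2) *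
        ((z - (conj E3 + ε)) / (z - conj E3)) ^ ((1 : ℂ) / 2))
    (hL : Tendsto (fun s : ℝ => R (E3 + (ε * (1 - t) : ℝ) + s * (I * (E3 - (E3 + ε)))))
      (nhdsWithin 0 (Set.Ioi 0)) (nhds L)) :
    (E3 - (E3 + ε)) / L = ((1 / (√t * √(1 - t)) : ℝ) : ℂ) * (-I *
      (((E3 + (ε * (1 - t) : ℝ) - conj E1) * (E3 + (ε * (1 - t) : ℝ) - conj E3))⁻¹ *
        ((E3 + (ε * (1 - t) : ℝ) - conj E1) / (E3 + (ε * (1 - t) : ℝ) - E1)) ^ ((1 : ℂ) / 2) *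
        (((E3 + (ε * (1 - t) : ℝ) - (conj E3 + ε)) /
          (E3 + (ε * (1 - t) : ℝ) - conj E3)) ^ ((1 : ℂ) / 2))⁻¹)) := by
  have hεc : (ε : ℂ) ≠ 0 := by exact_mod_cast hε.ne'
  set ζ : ℂ := E3 + (ε * (1 - t) : ℝ) with hζ
  set z : ℝ → ℂ := fun s => ζ + s * (I * (E3 - (E3 + ε))) with hz
  have z0 : z 0 = ζ := by simp [hz]
  have hzc : Continuous z := by fun_prop
  have hzt : Tendsto z (nhdsWithin 0 (Set.Ioi 0)) (nhds ζ) := by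
    have := hzc.tendsto 0
    rw [z0] at this
    exact this.mono_left nhdsWithin_le_nhds
  set W := (ζ - E1) / (ζ - conj E1) with hWdef
  set V := (ζ - (conj E3 + ε)) / (ζ - conj E3) with hVdef
  have hVs : V ∈ slitPlane := by
    left
    have := (Complex.abs_re_le_norm (V - 1)).trans_lt hV
    rw [abs_lt] at this
    simp at this
    linarith
  have tW : Tendsto (fun s => ((z s - E1) / (z s - conj E1)) ^ ((1 : ℂ) / 2))
      (nhdsWithin 0 (Set.Ioi 0)) (nhds (W ^ ((1 : ℂ) / 2))) :=
    ((hzt.sub_const _).div (hzt.sub_const _) n2).cpow tendsto_const_nhds (Or.inr hW)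
  have tV : Tendsto (fun s => ((z s - (conj E3 + ε)) / (z s - conj E3)) ^ ((1 : ℂ) / 2))
      (nhdsWithin 0 (Set.Ioi 0)) (nhds (V ^ ((1 : ℂ) / 2))) :=
    ((hzt.sub_const _).div (hzt.sub_const _) n3).cpow tendsto_const_nhds hVs
  have tU : Tendsto (fun s => ((z s - E3) / (z s - (E3 + ε))) ^ ((1 : ℂ) / 2))
      (nhdsWithin 0 (Set.Ioi 0)) (nhds (I * (√(1 - t) / √t : ℝ))) := by
    refine (tendsto_cut_factor h0 h1).congr fun s => ?_
    congr 1
    rw [← mul_div_mul_left _ _ hεc]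
    congr 1 <;> (simp only [hz, hζ]; push_cast; ring)
  have tR := (((((hzt.sub_const (E3 + ε)).mul (hzt.sub_const (conj E1))).mul
    (hzt.sub_const (conj E3))).mul tU).mul tW).mul tV
  have hLe := tendsto_nhds_unique hL (tR.congr fun s => (hR (z s)).symm)
  have hWinv : ((ζ - conj E1) / (ζ - E1)) ^ ((1 : ℂ) / 2) = (W ^ ((1 : ℂ) / 2))⁻¹ := by
    rw [← Complex.inv_cpow _ _ (fun h => hW (Complex.arg_eq_pi_iff.1 h).2), hWdef, inv_div]
  rw [hWinv, hLe]
  have hWne : W ^ ((1 : ℂ) / 2) ≠ 0 := csqrt_ne_zero fun h => hW (by rw [h]; rfl)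
  have hVne : V ^ ((1 : ℂ) / 2) ≠ 0 := csqrt_ne_zero (Complex.slitPlane_ne_zero hVs)
  have e1 : ζ - (E3 + ε) = -(ε * ((√t : ℝ) : ℂ) ^ 2) := by
    rw [← Complex.ofReal_pow, Real.sq_sqrt h0.le, hζ]; push_cast; ring
  have hs0 : ((√t : ℝ) : ℂ) ≠ 0 := by exact_mod_cast (Real.sqrt_pos.2 h0).ne'
  have hs1 : ((√(1 - t) : ℝ) : ℂ) ≠ 0 := by
    exact_mod_cast (Real.sqrt_pos.2 (sub_pos.2 h1)).ne'
  rw [e1]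
  generalize W ^ ((1 : ℂ) / 2) = w at *
  generalize V ^ ((1 : ℂ) / 2) = v at *
  generalize ζ - conj E1 = a at *
  generalize ζ - conj E3 = b at *
  push_cast
  field_simp
  rw [Complex.I_sq]
  ring


/-- As ε → 0⁺, the contour integral ∫_{[E2,E3]} dζ / R₊(ζ;ε), where R₊ is the
boundary value of R(·;ε) from the left of the segment oriented from E2 = E3 + ε
to E3, converges to (-iπ/((E3-Ē1)(E3-Ē3)))·√((E3-Ē1)/(E3-E1)) with error O(ε). -/
theorem stmt_3 (E1 E3 : ℂ) (hE1 : 0 < E1.im) (hE3 : 0 < E3.im) (hne : E1 ≠ E3)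
    (R : ℝ → ℂ → ℂ)
    (hR : ∀ ε : ℝ, ∀ z : ℂ, R ε z =
      (z - (E3 + ε)) * (z - (starRingEnd ℂ) E1) * (z - (starRingEnd ℂ) E3) *
        ((z - E3) / (z - (E3 + ε))) ^ ((1 : ℂ)/2) *
        ((z - E1) / (z - (starRingEnd ℂ) E1)) ^ ((1 : ℂ)/2) *
        ((z - ((starRingEnd ℂ) E3 + ε)) / (z - (starRingEnd ℂ) E3)) ^ ((1 : ℂ)/2))
    (Rp : ℝ → ℂ → ℂ)
    -- Rp ε is the non-tangential boundary value of R ε from the left of the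
    -- segment oriented from E2 = E3 + ε to E3 (left = direction i·(E3 - E2)):
    (hRp : ∀ ε ∈ Set.Ioi (0:ℝ), ∀ ζ ∈ openSegment ℝ (E3 + ε) E3,
      Tendsto (fun s : ℝ => R ε (ζ + s * (Complex.I * (E3 - (E3 + ε)))))
        (nhdsWithin 0 (Set.Ioi 0)) (nhds (Rp ε ζ))) :
    ∃ C > 0, ∃ ε₀ > 0, ∀ ε ∈ Set.Ioo (0:ℝ) ε₀,
      ‖(∫ t in (0:ℝ)..1, (E3 - (E3 + ε)) / Rp ε ((E3 + ε) + t * (E3 - (E3 + ε))))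
        - (-Complex.I * Real.pi / ((E3 - (starRingEnd ℂ) E1) * (E3 - (starRingEnd ℂ) E3)))
            * ((E3 - (starRingEnd ℂ) E1) / (E3 - E1)) ^ ((1 : ℂ)/2)‖ ≤ C * ε := by
  obtain ⟨C, hC, δ, hδ, hlip⟩ := exists_lipschitz_outer hE1 hE3 hne
  set K : ℂ := ((E3 - conj E1) * (E3 - conj E3))⁻¹ *
    ((E3 - conj E1) / (E3 - E1)) ^ ((1 : ℂ) / 2) with hK
  set m := E3.im with hmdef
  refine ⟨(2 * C + ‖K‖ / m) * Real.pi, by positivity, min δ m, by positivity, ?_⟩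
  rintro ε ⟨hε, hε'⟩
  obtain ⟨hεδ, hεm⟩ := lt_min_iff.1 hε'
  set H : ℝ → ℂ := fun t =>
    ((E3 + (ε * (1 - t) : ℝ) - conj E1) * (E3 + (ε * (1 - t) : ℝ) - conj E3))⁻¹ *
      ((E3 + (ε * (1 - t) : ℝ) - conj E1) / (E3 + (ε * (1 - t) : ℝ) - E1)) ^ ((1 : ℂ) / 2) *
      (((E3 + (ε * (1 - t) : ℝ) - (conj E3 + ε)) /
        (E3 + (ε * (1 - t) : ℝ) - conj E3)) ^ ((1 : ℂ) / 2))⁻¹ with hH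
  set f : ℝ → ℝ := fun t => 1 / (√t * √(1 - t)) with hf
  have hx {t : ℝ} (h0 : 0 < t) (h1 : t < 1) : ε * (1 - t) ∈ Set.Ioo 0 ε :=
    ⟨mul_pos hε (by linarith), by nlinarith⟩
  have hV {t : ℝ} : ‖(E3 + (ε * (1 - t) : ℝ) - (conj E3 + ε)) /
      (E3 + (ε * (1 - t) : ℝ) - conj E3) - 1‖ ≤ ε / (2 * m) := by
    have him : 2 * m ≤ ‖E3 + (ε * (1 - t) : ℝ) - conj E3‖ := by
      refine le_trans (le_of_eq ?_) ((le_abs_self _).trans (Complex.abs_im_le_norm _))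
      simp [hmdef]; ring
    have hne3 : E3 + (ε * (1 - t) : ℝ) - conj E3 ≠ 0 := norm_pos_iff.1 (by linarith)
    rw [div_sub_one hne3, norm_div]
    have : E3 + (ε * (1 - t) : ℝ) - (conj E3 + ε) - (E3 + (ε * (1 - t) : ℝ) - conj E3) =
      -(ε : ℂ) := by ring
    rw [this, norm_neg, Complex.norm_real, Real.norm_eq_abs, abs_of_pos hε]
    gcongr
  have hη : ε / (2 * m) ≤ 1 / 2 := by
    rw [div_le_div_iff₀ (by positivity) (by norm_num)]; linarith
  have hbound {t : ℝ} (h0 : 0 < t) (h1 : t < 1) : ‖H t - K‖ ≤ (2 * C + ‖K‖ / m) * ε := by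
    have hl := (hlip _ ⟨(hx h0 h1).1, (hx h0 h1).2.trans hεδ⟩).2
    obtain ⟨hv1, hv2⟩ := inv_csqrt_near_one (hV (t := t)) hη
    simp only [hH]
    generalize ((E3 + (ε * (1 - t) : ℝ) - conj E1) * (E3 + (ε * (1 - t) : ℝ) - conj E3))⁻¹ *
      ((E3 + (ε * (1 - t) : ℝ) - conj E1) / (E3 + (ε * (1 - t) : ℝ) - E1)) ^ ((1 : ℂ) / 2) = h at *
    generalize (((E3 + (ε * (1 - t) : ℝ) - (conj E3 + ε)) /
        (E3 + (ε * (1 - t) : ℝ) - conj E3)) ^ ((1 : ℂ) / 2))⁻¹ = v at *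
    calc ‖h * v - K‖ = ‖(h - K) * v + K * (v - 1)‖ := by congr 1; ring
      _ ≤ ‖h - K‖ * ‖v‖ + ‖K‖ * ‖v - 1‖ := by
        rw [← norm_mul, ← norm_mul]; exact norm_add_le _ _
      _ ≤ (C * (ε * (1 - t))) * 2 + ‖K‖ * (2 * (ε / (2 * m))) := by gcongr
      _ ≤ (C * ε) * 2 + ‖K‖ * (2 * (ε / (2 * m))) := by
        have := (hx h0 h1).2.le
        gcongr
      _ = _ := by field_simp
  have hcongr : (∫ t in (0:ℝ)..1, (E3 - (E3 + ε)) / Rp ε ((E3 + ε) + t * (E3 - (E3 + ε)))) =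
      ∫ t in (0:ℝ)..1, (f t : ℂ) * (-I * H t) := by
    rw [intervalIntegral.integral_of_le zero_le_one, intervalIntegral.integral_of_le zero_le_one,
      MeasureTheory.integral_Ioc_eq_integral_Ioo, MeasureTheory.integral_Ioc_eq_integral_Ioo]
    refine MeasureTheory.setIntegral_congr_fun measurableSet_Ioo ?_
    rintro t ⟨h0, h1⟩
    have hζ : (E3 + ε) + t * (E3 - (E3 + ε)) = E3 + (ε * (1 - t) : ℝ) := by push_cast; ring
    have hmem : E3 + (ε * (1 - t) : ℝ) ∈ openSegment ℝ (E3 + ε) E3 := by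
      refine ⟨1 - t, t, by linarith, h0, by ring, ?_⟩
      simp only [Complex.real_smul]; push_cast; ring
    have n2 : E3 + (ε * (1 - t) : ℝ) - conj E1 ≠ 0 := fun h => by
      have := congrArg Complex.im h; simp at this; linarith [hmdef]
    have n3 : E3 + (ε * (1 - t) : ℝ) - conj E3 ≠ 0 := fun h => by
      have := congrArg Complex.im h; simp at this; linarith [hmdef]
    change (E3 - (E3 + ε)) / Rp ε ((E3 + ε) + t * (E3 - (E3 + ε))) = _
    rw [hζ]
    exact boundary_value hε h0 h1 n2 n3
      (hlip _ ⟨(hx h0 h1).1, (hx h0 h1).2.trans hεδ⟩).1 (hV.trans_lt (by linarith)) (hR ε)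
      (hRp ε hε _ hmem)
  have hfi : IntervalIntegrable (fun t => (f t : ℂ)) MeasureTheory.volume 0 1 :=
    ⟨integrable_cut.1.ofReal, integrable_cut.2.ofReal⟩
  have hfint : ∫ t in (0:ℝ)..1, (f t : ℂ) * (-I * K) = Real.pi * (-I * K) := by
    rw [intervalIntegral.integral_mul_const, intervalIntegral.integral_ofReal]
    exact congrArg (fun r : ℝ => (r : ℂ) * (-I * K)) integral_cut
  have hgi : IntervalIntegrable (fun t => (2 * C + ‖K‖ / m) * ε * f t)
      MeasureTheory.volume 0 1 := integrable_cut.const_mul _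
  have hHm : Measurable H := by
    simp only [hH]
    fun_prop
  have hpt : ∀ t ∈ Set.Ioo (0 : ℝ) 1,
      ‖(f t : ℂ) * (-I * (H t - K))‖ ≤ (2 * C + ‖K‖ / m) * ε * f t := by
    rintro t ⟨h0, h1⟩
    have hft : 0 ≤ f t := by simp only [hf]; positivity
    rw [norm_mul, norm_mul, norm_neg, Complex.norm_I, one_mul, Complex.norm_real,
      Real.norm_eq_abs, abs_of_nonneg hft, mul_comm]
    exact mul_le_mul_of_nonneg_right (hbound h0 h1) hft
  have hae : ∀ᵐ t : ℝ, t ∈ Set.Ioc (0 : ℝ) 1 →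
      ‖(f t : ℂ) * (-I * (H t - K))‖ ≤ (2 * C + ‖K‖ / m) * ε * f t := by
    filter_upwards [MeasureTheory.Measure.ae_ne MeasureTheory.volume (1 : ℝ)] with t ht1 ht
    exact hpt t ⟨ht.1, lt_of_le_of_ne ht.2 ht1⟩
  have hfm : Measurable f := by simp only [hf]; fun_prop
  have hdi : IntervalIntegrable (fun t => (f t : ℂ) * (-I * (H t - K)))
      MeasureTheory.volume 0 1 := by
    refine hgi.mono_fun' (by fun_prop) ?_
    rw [Set.uIoc_of_le zero_le_one]
    exact (MeasureTheory.ae_restrict_iff' measurableSet_Ioc).2 hae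
  have hsplit : ∫ t in (0:ℝ)..1, (f t : ℂ) * (-I * H t) =
      (∫ t in (0:ℝ)..1, (f t : ℂ) * (-I * (H t - K))) + Real.pi * (-I * K) := by
    rw [← hfint, ← intervalIntegral.integral_add hdi (hfi.mul_const _)]
    congr 1
    ext t
    ring
  have htarget : (-Complex.I * Real.pi / ((E3 - conj E1) * (E3 - conj E3)))
      * ((E3 - conj E1) / (E3 - E1)) ^ ((1 : ℂ)/2) = Real.pi * (-I * K) := by
    rw [hK]; ring
  rw [hcongr, hsplit, htarget, add_sub_cancel_right]
  refine (intervalIntegral.norm_integral_le_of_norm_le zero_le_one hae hgi).trans (le_of_eq ?_)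
  rw [intervalIntegral.integral_const_mul, hf, integral_cut]
  ring
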